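/- Let p be an odd prime and let f : ℤ_p → ℤ_p be a 1-Lipschitz function that is uniformly differentiable modulo p with N_1(f) = 1. Then f is measure-preserving (with respect to the Haar probability measure on ℤ_p) if and only if both of the following hold: (i) the residues f(0), f(1), …, f(p−1) modulo p form a complete set of all p distinct residues modulo p; (ii) for every integer i with 0 ≤ i ≤ p−1, (f(i + p) − f(i))/p ≢ 0 (mod p). -/

import Mathlib

/-!
Under the differentiability hypothesis, `f` is measure-preserving exactly when it is an isometry.

If (i) and (ii) hold, then the derivative modulo `p` is a unit at every point
(`not_dvd_deriv`), so `f x - f y ≡ (x - y) * d y` has the same norm as `x - y` when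
`x ≡ y (mod p)`, while (i) settles the case `x ≢ y (mod p)`; hence `f` is an isometry
(`isometry_of_residues`). An isometry of a compact metric space into itself is surjective
(`Isometry.surjective_of_compact`), so the preimage of each ball is a ball of the same radius.
By translation invariance it has the same Haar measure, and in an ultrametric space the balls
form a π-system generating the Borel sets (`measurePreserving_of_isometry`).

Conversely, a measure-preserving map meets every ball, since balls have positive measure; this
gives (i). If (ii) fails at `i`, then `f` maps the whole ball `i + pℤ_p` into a single ball of
radius `p⁻²`, and the preimage of that ball has too large a measure, because `i + pℤ_p` contains
two disjoint balls of radius `p⁻²`.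
-/

open MeasureTheory

variable (p : ℕ) [Fact p.Prime]

noncomputable instance : MeasurableSpace ℤ_[p] := borel _
instance : BorelSpace ℤ_[p] := ⟨rfl⟩

/-- The normalized Haar probability measure on the compact additive group `ℤ_[p]`. -/
noncomputable def haarZp : Measure ℤ_[p] :=
  Measure.addHaarMeasure ⟨⟨Set.univ, isCompact_univ⟩, by simp⟩

/-- `f` is uniformly differentiable modulo `p` with `N₁(f) = 1`. -/
def UnifDiffModP (f : ℤ_[p] → ℤ_[p]) : Prop :=
  ∃ d : ℤ_[p] → ℤ_[p], ∀ (u h : ℤ_[p]) (s : ℕ), 1 ≤ s →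
    (p : ℤ_[p]) ^ (s + 1) ∣ f (u + (p : ℤ_[p]) ^ s * h) - (f u + (p : ℤ_[p]) ^ s * h * d u)

theorem PadicInt.norm_le_iff_pow_dvd (x : ℤ_[p]) (n : ℕ) :
    ‖x‖ ≤ (p : ℝ) ^ (-n : ℤ) ↔ (p : ℤ_[p]) ^ n ∣ x := by
  rw [PadicInt.norm_le_pow_iff_mem_span_pow, Ideal.mem_span_singleton]

theorem PadicInt.toZMod_eq_iff (x y : ℤ_[p]) :
    PadicInt.toZMod x = PadicInt.toZMod y ↔ (p : ℤ_[p]) ∣ x - y := by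
  rw [← sub_eq_zero, ← map_sub, ← RingHom.mem_ker, PadicInt.ker_toZMod,
    PadicInt.maximalIdeal_eq_span_p, Ideal.mem_span_singleton]

theorem PadicInt.dvd_sub_zmodRepr (x : ℤ_[p]) : (p : ℤ_[p]) ∣ x - (x.zmodRepr : ℤ_[p]) :=
  (PadicInt.norm_lt_one_iff_dvd _).1 (PadicInt.norm_sub_zmodRepr_lt_one x)

theorem lipschitz_dvd (f : ℤ_[p] → ℤ_[p]) (hf : ∀ x y : ℤ_[p], ‖f x - f y‖ ≤ ‖x - y‖)
    (x y : ℤ_[p]) (h : (p : ℤ_[p]) ∣ x - y) : (p : ℤ_[p]) ∣ f x - f y :=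
  (PadicInt.norm_lt_one_iff_dvd _).1
    ((hf x y).trans_lt ((PadicInt.norm_lt_one_iff_dvd _).2 h))

/-- Condition (ii) at a given point, read as a divisibility. -/
theorem norm_div_le_iff (x : ℤ_[p]) :
    ‖(x : ℚ_[p]) / (p : ℚ_[p])‖ ≤ (p : ℝ)⁻¹ ↔ (p : ℤ_[p]) ^ 2 ∣ x := by
  have hp : (0 : ℝ) < p := mod_cast (Fact.out : p.Prime).pos
  have e : (p : ℝ) ^ (-((2 : ℕ) : ℤ)) = (p : ℝ)⁻¹ * (p : ℝ)⁻¹ := by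
    rw [zpow_neg, zpow_natCast, pow_two, mul_inv]
  rw [← PadicInt.norm_le_iff_pow_dvd, e, norm_div, Padic.norm_p, div_le_iff₀ (inv_pos.2 hp)]
  rfl

/-- If the derivative at `u` vanished modulo `p`, then `f` would be constant modulo `p ^ 2` on
`u + pℤ_p`, which contains both `i` and `i + p`. -/
theorem not_dvd_deriv (f d : ℤ_[p] → ℤ_[p])
    (hd : ∀ (u h : ℤ_[p]) (s : ℕ), 1 ≤ s →
      (p : ℤ_[p]) ^ (s + 1) ∣ f (u + (p : ℤ_[p]) ^ s * h) - (f u + (p : ℤ_[p]) ^ s * h * d u))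
    (i u : ℤ_[p]) (hi : ¬ (p : ℤ_[p]) ^ 2 ∣ f (i + p) - f i) (hu : (p : ℤ_[p]) ∣ u - i) :
    ¬ (p : ℤ_[p]) ∣ d u := by
  rintro ⟨c, hc⟩
  obtain ⟨t, ht⟩ := hu
  apply hi
  obtain ⟨a, ha⟩ := hd u (1 - t) 1 le_rfl
  obtain ⟨b, hb⟩ := hd u (-t) 1 le_rfl
  have e1 : u + (p : ℤ_[p]) ^ 1 * (1 - t) = i + p := by linear_combination ht
  have e2 : u + (p : ℤ_[p]) ^ 1 * (-t) = i := by linear_combination ht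
  rw [e1, hc] at ha
  rw [e2, hc] at hb
  exact ⟨a - b + c, by linear_combination ha - hb⟩

theorem isometry_of_residues (f : ℤ_[p] → ℤ_[p])
    (hf : ∀ x y : ℤ_[p], ‖f x - f y‖ ≤ ‖x - y‖) (hud : UnifDiffModP p f)
    (h1 : Function.Surjective (fun i : Fin p => PadicInt.toZMod (f ((i : ℕ) : ℤ_[p]))))
    (h2 : ∀ i : ℕ, i ≤ p - 1 → ¬ (p : ℤ_[p]) ^ 2 ∣ f ((i : ℤ_[p]) + p) - f (i : ℤ_[p])) :
    Isometry f := by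
  obtain ⟨d, hd⟩ := hud
  have hp : p.Prime := Fact.out
  have hinj := ((Fintype.bijective_iff_surjective_and_card _).2
    ⟨h1, by rw [Fintype.card_fin, ZMod.card]⟩).1
  have hdu : ∀ u, ¬ (p : ℤ_[p]) ∣ d u := fun u =>
    not_dvd_deriv p f d hd u.zmodRepr u
      (h2 _ (Nat.le_sub_one_of_lt (PadicInt.zmodRepr_lt_p u))) (PadicInt.dvd_sub_zmodRepr p u)
  have hres : ∀ x y, (p : ℤ_[p]) ∣ f x - f y → (p : ℤ_[p]) ∣ x - y := by
    intro x y h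
    have key : ∀ z, PadicInt.toZMod (f z) = PadicInt.toZMod (f (z.zmodRepr : ℤ_[p])) := fun z =>
      (PadicInt.toZMod_eq_iff p _ _).2 (lipschitz_dvd p f hf _ _ (PadicInt.dvd_sub_zmodRepr p z))
    rw [← PadicInt.toZMod_eq_iff, key x, key y] at h
    have := @hinj ⟨_, PadicInt.zmodRepr_lt_p x⟩ ⟨_, PadicInt.zmodRepr_lt_p y⟩ h
    have h3 : x.zmodRepr = y.zmodRepr := congrArg Fin.val this
    have h4 := dvd_sub (PadicInt.dvd_sub_zmodRepr p x) (PadicInt.dvd_sub_zmodRepr p y)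
    rw [h3] at h4
    simpa using h4
  refine Isometry.of_dist_eq fun x y => ?_
  rw [dist_eq_norm, dist_eq_norm]
  refine le_antisymm (hf x y) ?_
  by_contra! hlt
  have hne : x - y ≠ 0 := by
    intro h0
    rw [h0, norm_zero] at hlt
    exact absurd hlt (norm_nonneg _).not_gt
  obtain hv | hv := Nat.eq_zero_or_pos (x - y).valuation
  · have hn : ‖x - y‖ = 1 := by rw [PadicInt.norm_eq_zpow_neg_valuation hne, hv]; simp
    rw [hn, PadicInt.norm_lt_one_iff_dvd] at hlt
    exact absurd hn ((PadicInt.norm_lt_one_iff_dvd _).2 (hres x y hlt)).ne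
  · have hspec := PadicInt.unitCoeff_spec hne
    have hnorm := PadicInt.norm_eq_zpow_neg_valuation hne
    generalize PadicInt.unitCoeff hne = w at hspec
    generalize (x - y).valuation = v at hspec hnorm hv
    have hdv : (p : ℤ_[p]) ^ (v + 1) ∣ f x - f y := by
      rw [← PadicInt.norm_le_iff_pow_dvd, PadicInt.norm_le_pow_iff_norm_lt_pow_add_one]
      rw [hnorm] at hlt
      rwa [show -((v + 1 : ℕ) : ℤ) + 1 = -(v : ℤ) by push_cast; ring]
    have h3 := hd y w v hv
    have e : y + (p : ℤ_[p]) ^ v * w = x := by linear_combination -hspec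
    rw [e] at h3
    have h4 : (p : ℤ_[p]) ^ v * p ∣ (p : ℤ_[p]) ^ v * (w * d y) := by
      rw [← pow_succ]
      exact (dvd_sub hdv h3).trans (dvd_of_eq (by ring))
    have hp0 : (p : ℤ_[p]) ^ v ≠ 0 := pow_ne_zero _ (mod_cast hp.ne_zero)
    exact hdu y (w.isUnit.dvd_mul_left.1 ((mul_dvd_mul_iff_left hp0).1 h4))

/-- If `y` were at distance `ε > 0` from the range of `f`, the orbit of `y` would be
`ε`-separated, contradicting sequential compactness. -/
theorem Isometry.surjective_of_compact {X : Type*} [MetricSpace X] [CompactSpace X]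
    {f : X → X} (hf : Isometry f) : Function.Surjective f := by
  intro y
  by_contra hy
  have hcl : IsClosed (Set.range f) := (isCompact_range hf.continuous).isClosed
  obtain ⟨ε, hε, hball⟩ := Metric.isOpen_iff.1 hcl.isOpen_compl y hy
  obtain ⟨a, -, φ, hφ, hlim⟩ :=
    isCompact_univ.tendsto_subseq (x := fun n => f^[n] y) (fun _ => Set.mem_univ _)
  obtain ⟨N, hN⟩ := Metric.cauchySeq_iff'.1 hlim.cauchySeq ε hε
  have hlt := hN (N + 1) (Nat.le_succ N)
  obtain ⟨k, hk⟩ := Nat.exists_eq_add_of_lt (hφ (Nat.lt_succ_self N))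
  have hiter : ∀ m, Isometry (f^[m]) := fun m => by
    induction m with
    | zero => exact isometry_id
    | succ m ih => rw [Function.iterate_succ]; exact ih.comp hf
  have e : φ (N + 1) = φ N + (k + 1) := by rw [← add_assoc]; exact hk
  simp only [Function.comp_apply] at hlt
  rw [e, Function.iterate_add_apply, (hiter _).dist_eq, Function.iterate_succ_apply'] at hlt
  exact hball (Metric.mem_ball.2 hlt) ⟨_, rfl⟩

instance : (haarZp p).IsAddHaarMeasure := by
  unfold haarZp
  infer_instance

theorem haarZp_ball (a b : ℤ_[p]) (r : ℝ) :
    haarZp p (Metric.ball a r) = haarZp p (Metric.ball b r) := by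
  rw [Measure.addHaar_ball_center, ← Measure.addHaar_ball_center _ b]

theorem haarZp_closedBall (a b : ℤ_[p]) (r : ℝ) :
    haarZp p (Metric.closedBall a r) = haarZp p (Metric.closedBall b r) := by
  rw [Measure.addHaar_closedBall_center, ← Measure.addHaar_closedBall_center _ b]

theorem measurePreserving_of_isometry (f : ℤ_[p] → ℤ_[p]) (hf : Isometry f) :
    MeasurePreserving f (haarZp p) (haarZp p) := by
  have hm : Measurable f := hf.continuous.measurable
  refine ⟨hm, ?_⟩
  have hbasis : TopologicalSpace.IsTopologicalBasis
      {s : Set ℤ_[p] | ∃ (a : ℤ_[p]) (r : ℝ), s = Metric.ball a r} := by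
    refine TopologicalSpace.isTopologicalBasis_of_isOpen_of_nhds ?_ ?_
    · rintro _ ⟨a, r, rfl⟩
      exact Metric.isOpen_ball
    · intro a u ha hu
      obtain ⟨r, hr, hsub⟩ := Metric.isOpen_iff.1 hu a ha
      exact ⟨_, ⟨a, r, rfl⟩, Metric.mem_ball_self hr, hsub⟩
  have : IsFiniteMeasure ((haarZp p).map f) := Measure.isFiniteMeasure_map _ _
  refine ext_of_generate_finite _ hbasis.borel_eq_generateFrom ?_ ?_ ?_
  · rintro _ ⟨a, r, rfl⟩ _ ⟨b, s, rfl⟩ hne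
    obtain h | h | h := IsUltrametricDist.ball_subset_trichotomy a b r s
    · exact ⟨a, r, Set.inter_eq_left.2 h⟩
    · exact ⟨b, s, Set.inter_eq_right.2 h⟩
    · exact absurd hne (Set.not_nonempty_iff_eq_empty.2 h.inter_eq)
  · rintro _ ⟨c, r, rfl⟩
    obtain ⟨a, rfl⟩ := hf.surjective_of_compact c
    rw [Measure.map_apply hm Metric.isOpen_ball.measurableSet, hf.preimage_ball]
    exact haarZp_ball p _ _ _
  · rw [Measure.map_apply hm MeasurableSet.univ, Set.preimage_univ]

theorem residues_surjective (f : ℤ_[p] → ℤ_[p])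
    (hf : ∀ x y : ℤ_[p], ‖f x - f y‖ ≤ ‖x - y‖)
    (hmp : MeasurePreserving f (haarZp p) (haarZp p)) :
    Function.Surjective (fun i : Fin p => PadicInt.toZMod (f ((i : ℕ) : ℤ_[p]))) := by
  intro c
  have hpos : 0 < haarZp p (f ⁻¹' Metric.ball (c.val : ℤ_[p]) 1) := by
    rw [hmp.measure_preimage Metric.isOpen_ball.measurableSet.nullMeasurableSet]
    exact Metric.measure_ball_pos _ _ one_pos
  obtain ⟨x, hx⟩ := nonempty_of_measure_ne_zero hpos.ne'
  rw [Set.mem_preimage, mem_ball_iff_norm, PadicInt.norm_lt_one_iff_dvd,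
    ← PadicInt.toZMod_eq_iff, map_natCast, ZMod.natCast_zmod_val] at hx
  refine ⟨⟨_, PadicInt.zmodRepr_lt_p x⟩, ?_⟩
  rw [← hx]
  exact ((PadicInt.toZMod_eq_iff p _ _).2
    (lipschitz_dvd p f hf _ _ (PadicInt.dvd_sub_zmodRepr p x))).symm

theorem not_sq_dvd_of_measurePreserving (f : ℤ_[p] → ℤ_[p]) (hud : UnifDiffModP p f)
    (hmp : MeasurePreserving f (haarZp p) (haarZp p)) (i : ℤ_[p]) :
    ¬ (p : ℤ_[p]) ^ 2 ∣ f (i + p) - f i := by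
  rintro ⟨c, hc⟩
  obtain ⟨d, hd⟩ := hud
  have hp : p.Prime := Fact.out
  have hp0 : (p : ℤ_[p]) ≠ 0 := mod_cast hp.ne_zero
  set r : ℝ := (p : ℝ) ^ (-((2 : ℕ) : ℤ)) with hr
  have hr0 : 0 < r := zpow_pos (mod_cast hp.pos) _
  have hmem : ∀ x y : ℤ_[p], x ∈ Metric.closedBall y r ↔ (p : ℤ_[p]) ^ 2 ∣ x - y := fun x y => by
    rw [mem_closedBall_iff_norm, hr, PadicInt.norm_le_iff_pow_dvd]
  have hconst : ∀ t, (p : ℤ_[p]) ^ 2 ∣ f (i + p * t) - f i := by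
    intro t
    obtain ⟨a, ha⟩ := hd i 1 1 le_rfl
    obtain ⟨b, hb⟩ := hd i t 1 le_rfl
    simp only [pow_one, mul_one, one_add_one_eq_two] at ha hb
    exact ⟨b + t * (c - a), by linear_combination hb + t * hc - t * ha⟩
  have hsub : Metric.closedBall i r ∪ Metric.closedBall (i + p) r ⊆
      f ⁻¹' Metric.closedBall (f i) r := by
    rintro x (hx | hx)
    · obtain ⟨t, ht⟩ := (hmem _ _).1 hx
      rw [Set.mem_preimage, hmem, show x = i + p * (p * t) by linear_combination ht]
      exact hconst _
    · obtain ⟨t, ht⟩ := (hmem _ _).1 hx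
      rw [Set.mem_preimage, hmem, show x = i + p * (1 + p * t) by linear_combination ht]
      exact hconst _
  have hdisj : Disjoint (Metric.closedBall i r) (Metric.closedBall (i + p) r) := by
    rw [Set.disjoint_left]
    intro x hx hx'
    have h := dvd_sub ((hmem _ _).1 hx) ((hmem _ _).1 hx')
    rw [show x - i - (x - (i + p)) = (p : ℤ_[p]) * 1 by ring, pow_two,
      mul_dvd_mul_iff_left hp0] at h
    exact PadicInt.prime_p.not_isUnit (isUnit_of_dvd_one h)
  have hle := measure_mono (μ := haarZp p) hsub
  rw [measure_union hdisj Metric.isClosed_closedBall.measurableSet,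
    hmp.measure_preimage Metric.isClosed_closedBall.measurableSet.nullMeasurableSet,
    haarZp_closedBall p (i + p) i, haarZp_closedBall p (f i) i] at hle
  have hpos : 0 < haarZp p (Metric.closedBall i r) := Metric.measure_closedBall_pos _ _ hr0
  exact absurd hle (ENNReal.lt_add_right (measure_ne_top _ _) hpos.ne').not_ge

/-- Proposition 4.5: for an odd prime `p`, a uniformly differentiable modulo `p`,
1-Lipschitz function `f` on `ℤ_[p]` is measure-preserving iff
(i) the residues `f(0), …, f(p−1)` modulo `p` form a complete set of residues mod `p`, and
(ii) `(f(i+p) − f(i))/p ≢ 0 (mod p)` for all `0 ≤ i ≤ p−1`. -/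
theorem measurePreserving_iff_of_unifDiff (hodd : Odd p) (f : ℤ_[p] → ℤ_[p])
    (hf : ∀ x y : ℤ_[p], ‖f x - f y‖ ≤ ‖x - y‖) (hud : UnifDiffModP p f) :
    MeasurePreserving f (haarZp p) (haarZp p) ↔
      (Function.Surjective (fun i : Fin p => PadicInt.toZMod (f ((i : ℕ) : ℤ_[p]))) ∧
        ∀ i : ℕ, i ≤ p - 1 →
          ¬ ‖((f ((i : ℤ_[p]) + (p : ℤ_[p])) - f ((i : ℕ) : ℤ_[p]) : ℤ_[p]) : ℚ_[p]) /
              (p : ℚ_[p])‖ ≤ (p : ℝ)⁻¹) := by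
  have hrw : ∀ i : ℕ,
      ‖((f ((i : ℤ_[p]) + (p : ℤ_[p])) - f ((i : ℕ) : ℤ_[p]) : ℤ_[p]) : ℚ_[p]) /
        (p : ℚ_[p])‖ ≤ (p : ℝ)⁻¹ ↔
        (p : ℤ_[p]) ^ 2 ∣ f ((i : ℤ_[p]) + p) - f (i : ℤ_[p]) :=
    fun i => norm_div_le_iff p _
  simp only [hrw]
  exact ⟨fun hmp => ⟨residues_surjective p f hf hmp,
      fun i _ => not_sq_dvd_of_measurePreserving p f hud hmp i⟩,
    fun h => measurePreserving_of_isometry p f (isometry_of_residues p f hf hud h.1 h.2)⟩
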